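/- Let V ⊆ ℝ^d, let n ∈ ℕ, let K be a polynomial kernel of degree at most n on ℝ^d, and let r be the rank of K restricted to V × V. Then there exist maps φ, ψ : ℝ^d → ℝ^r, each of whose r coordinate functions is a real polynomial in d variables, such that K(x,y) = ⟨φ(x), ψ(y)⟩ for all x, y ∈ V. If moreover K restricted to V × V is positive semidefinite (i.e., for every finite set of points x₁, …, x_N ∈ V the matrix (K(xᵢ, xⱼ)) is positive semidefinite), then one can take φ = ψ. -/

import Mathlib

/-- The linear map sending a real polynomial in the variables `ι` to its restriction
(as a function) to a subset `V` of `ι → ℝ`. -/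
noncomputable def restrictEval {ι : Type} (V : Set (ι → ℝ)) :
    MvPolynomial ι ℝ →ₗ[ℝ] (↥V → ℝ) where
  toFun p := fun x => MvPolynomial.eval (x : ι → ℝ) p
  map_add' p q := by funext x; simp
  map_smul' c p := by funext x; simp [MvPolynomial.smul_eval]

/-- The space of functions `V → ℝ` that are restrictions to `V` of polynomials of
total degree at most `n`. -/
noncomputable def polySpace {ι : Type} (V : Set (ι → ℝ)) (n : ℕ) :
    Submodule ℝ (↥V → ℝ) :=
  (MvPolynomial.restrictTotalDegree ι ℝ n).map (restrictEval V)

/-- The Hilbert function of `V`: the dimension of the space of restrictions to `V`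
of polynomials of total degree at most `n`. -/
noncomputable def HF {ι : Type} (V : Set (ι → ℝ)) (n : ℕ) : ℕ :=
  Module.finrank ℝ ↥(polySpace V n)

/-- Multi-indices in `d` variables of total degree at most `n`. -/
abbrev MIdx (d n : ℕ) := {a : Fin d → Fin (n + 1) // ∑ i, (a i : ℕ) ≤ n}

/-- The polynomial kernel `K(x,y) = Σ_{|α|≤n, |β|≤n} c_{αβ} x^α y^β` of degree at most `n`
determined by the coefficient matrix `c`. -/
noncomputable def polyKer {d n : ℕ} (c : MIdx d n → MIdx d n → ℝ) (x y : Fin d → ℝ) : ℝ :=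
  ∑ a : MIdx d n, ∑ b : MIdx d n,
    c a b * ((∏ i, x i ^ (a.1 i : ℕ)) * ∏ i, y i ^ (b.1 i : ℕ))

/-- The rank of the kernel `K` restricted to `V × V`: the least `r` such that there are
feature maps `φ, ψ : V → ℝ^r` with `K(x,y) = ⟨φ(x), ψ(y)⟩` on `V × V`. -/
noncomputable def rankOn {X : Type*} (V : Set X) (K : X → X → ℝ) : ℕ :=
  sInf {r : ℕ | ∃ φ ψ : ↥V → Fin r → ℝ, ∀ x y : ↥V, K x.1 y.1 = ∑ i, φ x i * ψ y i}

/-!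
If `K = F * G` factors through `𝕜 ^ r` with `r` minimal, then the rows of `G` are linearly
independent, so `r` of the columns of `G`, say those at the points `z`, form an invertible matrix
`P`. Restricting `K` to these columns gives `K_z = F * P`, whence `F = K_z * P⁻¹`: the columns of
`F` are linear combinations of columns of `K`. For a polynomial kernel every rank factorization
therefore consists of restrictions of polynomials. If `K` is Hermitian, then `K = K_z * H` with
`H = P⁻¹ * G` implies `K = Hᴴ * K_zz * H`, and a factorization `K_zz = Sᴴ * S` of the finite
positive semidefinite matrix `K_zz` gives
`K = (S * H)ᴴ * (S * H)`.
-/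

open Matrix MvPolynomial

theorem row_mul_mem {R X Y ι : Type*} [Semiring R] [Fintype ι] {A : Matrix X ι R}
    {B : Matrix ι Y R} {W : Submodule R (Y → R)} (hB : ∀ i, B.row i ∈ W) (x : X) :
    (A * B).row x ∈ W := by
  have row_eq : (A * B).row x = ∑ i, A x i • B.row i := by
    ext y
    simp [mul_apply]
  exact row_eq ▸ W.sum_mem fun i _ => W.smul_mem _ (hB i)

theorem exists_eq_mul_of_forall_row_mem {𝕜 X Y : Type*} [DivisionRing 𝕜] {K : Matrix X Y 𝕜}
    (W : Submodule 𝕜 (Y → 𝕜)) [FiniteDimensional 𝕜 W] (hK : ∀ x, K.row x ∈ W) :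
    ∃ (F : Matrix X (Fin (Module.finrank 𝕜 W)) 𝕜) (G : Matrix (Fin (Module.finrank 𝕜 W)) Y 𝕜),
      K = F * G := by
  let b := Module.finBasis 𝕜 W
  refine ⟨of fun x => b.repr ⟨K.row x, hK x⟩, of fun i => (b i : Y → 𝕜), ?_⟩
  ext x y
  have expansion : ∑ i, b.repr ⟨K.row x, hK x⟩ i • (b i : Y → 𝕜) = K.row x := by
    simpa only [W.coe_sum, W.coe_smul] using
      congrArg Subtype.val (b.sum_repr ⟨K.row x, hK x⟩)
  simpa [mul_apply] using (congrFun expansion y).symm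

section Field

variable {𝕜 X Y : Type*} [Field 𝕜] {r : ℕ}

/-- A factorization `K = F * G` through `𝕜 ^ r` with `r` minimal. The row and column types may be
infinite: `K` is a kernel on `X × Y`, the rows of `F` and the columns of `G` are the values of the
two feature maps. -/
structure IsRankFactorization (K : Matrix X Y 𝕜) (F : Matrix X (Fin r) 𝕜)
    (G : Matrix (Fin r) Y 𝕜) : Prop where
  eq_mul : K = F * G
  le_of_eq_mul : ∀ {s : ℕ} (F' : Matrix X (Fin s) 𝕜) (G' : Matrix (Fin s) Y 𝕜), K = F' * G' → r ≤ s

theorem exists_isUnit_submatrix_of_linearIndependent_row {G : Matrix (Fin r) Y 𝕜}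
    (hG : LinearIndependent 𝕜 G.row) : ∃ z : Fin r → Y, IsUnit (G.submatrix id z) := by
  have span_col : Submodule.span 𝕜 (Set.range G.col) = ⊤ :=
    span_flip_eq_top_iff_linearIndependent.2 hG
  have basis_of_columns := Submodule.exists_fun_fin_finrank_span_eq 𝕜 (Set.range G.col)
  rw [span_col, finrank_top, Module.finrank_fin_fun] at basis_of_columns
  obtain ⟨v, hv, -, hv_indep⟩ := basis_of_columns
  choose z hz using hv
  refine ⟨z, linearIndependent_cols_iff_isUnit.1 ?_⟩
  rwa [← funext hz] at hv_indep

namespace IsRankFactorization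

variable {K : Matrix X Y 𝕜} {F : Matrix X (Fin r) 𝕜} {G : Matrix (Fin r) Y 𝕜}

theorem transpose (h : IsRankFactorization K F G) : IsRankFactorization Kᵀ Gᵀ Fᵀ where
  eq_mul := by rw [h.eq_mul, transpose_mul]
  le_of_eq_mul F' G' hK := h.le_of_eq_mul G'ᵀ F'ᵀ <| by
    rw [← transpose_mul, ← hK, transpose_transpose]

theorem linearIndependent_row (h : IsRankFactorization K F G) : LinearIndependent 𝕜 G.row := by
  let W : Submodule 𝕜 (Y → 𝕜) := Submodule.span 𝕜 (Set.range G.row)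
  have : FiniteDimensional 𝕜 W := FiniteDimensional.span_of_finite 𝕜 (Set.finite_range G.row)
  have row_mem : ∀ x, K.row x ∈ W :=
    h.eq_mul ▸ row_mul_mem fun i => Submodule.subset_span ⟨i, rfl⟩
  obtain ⟨F', G', hK⟩ := exists_eq_mul_of_forall_row_mem _ row_mem
  rw [linearIndependent_iff_card_le_finrank_span, Fintype.card_fin]
  exact h.le_of_eq_mul F' G' hK

theorem exists_left_eq_submatrix_mul (h : IsRankFactorization K F G) :
    ∃ (z : Fin r → Y) (C : Matrix (Fin r) (Fin r) 𝕜), F = K.submatrix id z * C := by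
  obtain ⟨z, hz⟩ := exists_isUnit_submatrix_of_linearIndependent_row h.linearIndependent_row
  refine ⟨z, (G.submatrix id z)⁻¹, ?_⟩
  rw [h.eq_mul, submatrix_mul _ _ id id z Function.bijective_id, submatrix_id_id,
    mul_nonsing_inv_cancel_right _ _ ((isUnit_iff_isUnit_det _).1 hz)]

theorem col_mem (h : IsRankFactorization K F G) (W : Submodule 𝕜 (X → 𝕜))
    (hW : ∀ y, K.col y ∈ W) (i : Fin r) : F.col i ∈ W := by
  obtain ⟨z, C, hF⟩ := h.exists_left_eq_submatrix_mul
  have col_mem : (Cᵀ * (K.submatrix id z)ᵀ).row i ∈ W := row_mul_mem (fun j => hW (z j)) i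
  rwa [← transpose_mul, ← hF] at col_mem

theorem row_mem (h : IsRankFactorization K F G) (W : Submodule 𝕜 (Y → 𝕜))
    (hW : ∀ x, K.row x ∈ W) (i : Fin r) : G.row i ∈ W :=
  h.transpose.col_mem W hW i

end IsRankFactorization

end Field

section PosSemidef

variable {𝕜 X : Type*}

theorem eq_conjTranspose_mul_submatrix_mul_of_isHermitian
    [NonUnitalNonAssocSemiring 𝕜] [StarRing 𝕜] {ι : Type*} [Fintype ι]
    {K : Matrix X X 𝕜} (hK : K.IsHermitian) {z : ι → X} {H : Matrix ι X 𝕜}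
    (h : K = K.submatrix id z * H) : K = Hᴴ * K.submatrix z z * H := by
  have rows_eq : K.submatrix z id = K.submatrix z z * H := by
    conv_lhs => rw [h]
    rfl
  have cols_eq : K.submatrix id z = Hᴴ * K.submatrix z z := by
    simpa only [conjTranspose_submatrix, conjTranspose_mul, hK.eq] using
      congrArg conjTranspose rows_eq
  rwa [cols_eq] at h

open scoped ComplexOrder MatrixOrder in
theorem IsRankFactorization.exists_eq_conjTranspose_mul_self [RCLike 𝕜] {r : ℕ}
    {K : Matrix X X 𝕜} {F : Matrix X (Fin r) 𝕜} {G : Matrix (Fin r) X 𝕜}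
    (h : IsRankFactorization K F G) (hK : K.PosSemidef) :
    ∃ S : Matrix (Fin r) (Fin r) 𝕜, K = (S * G)ᴴ * (S * G) := by
  obtain ⟨z, C, hF⟩ := h.exists_left_eq_submatrix_mul
  have interpolation : K = K.submatrix id z * (C * G) := by
    rw [← Matrix.mul_assoc, ← hF, h.eq_mul]
  obtain ⟨S, hS⟩ := CStarAlgebra.nonneg_iff_eq_star_mul_self.1 (hK.submatrix z).nonneg
  refine ⟨S * C, ?_⟩
  rw [eq_conjTranspose_mul_submatrix_mul_of_isHermitian hK.isHermitian interpolation, hS,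
    star_eq_conjTranspose]
  simp only [conjTranspose_mul, Matrix.mul_assoc]

end PosSemidef

/-- The restriction of the kernel `K` to `V × V`, as a matrix indexed by the points of `V`. -/
def restrictKernel {X : Type*} (V : Set X) (K : X → X → ℝ) : Matrix V V ℝ :=
  of fun x y => K x y

section Rank

variable {X : Type*} {V : Set X} {K : X → X → ℝ}

theorem exists_isRankFactorization_rankOn {s : ℕ} {F : Matrix V (Fin s) ℝ}
    {G : Matrix (Fin s) V ℝ} (hK : restrictKernel V K = F * G) :
    ∃ (F' : Matrix V (Fin (rankOn V K)) ℝ) (G' : Matrix (Fin (rankOn V K)) V ℝ),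
      IsRankFactorization (restrictKernel V K) F' G' := by
  have mem_iff (t : ℕ) : (∃ φ ψ : V → Fin t → ℝ, ∀ x y : V, K x y = ∑ i, φ x i * ψ y i) ↔
      ∃ (F' : Matrix V (Fin t) ℝ) (G' : Matrix (Fin t) V ℝ), restrictKernel V K = F' * G' :=
    ⟨fun ⟨φ, ψ, h⟩ => ⟨of φ, (of ψ)ᵀ, Matrix.ext h⟩,
      fun ⟨F', G', h⟩ => ⟨F', G'ᵀ, fun x y => congrFun₂ h x y⟩⟩
  obtain ⟨F', G', h⟩ := (mem_iff _).1 (Nat.sInf_mem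
    (s := {t | ∃ φ ψ : V → Fin t → ℝ, ∀ x y : V, K x y = ∑ i, φ x i * ψ y i})
    ⟨s, (mem_iff s).2 ⟨F, G, hK⟩⟩)
  exact ⟨F', G', h, fun F'' G'' h' => Nat.sInf_le ((mem_iff _).2 ⟨F'', G'', h'⟩)⟩

theorem posSemidef_restrictKernel (hsymm : ∀ x ∈ V, ∀ y ∈ V, K x y = K y x)
    (hnonneg : ∀ (N : ℕ) (z : Fin N → X), (∀ j, z j ∈ V) →
      ∀ v : Fin N → ℝ, 0 ≤ ∑ j, ∑ l, v j * K (z j) (z l) * v l) :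
    (restrictKernel V K).PosSemidef := by
  refine ⟨Matrix.ext fun x y => hsymm y y.2 x x.2, fun v => ?_⟩
  let e := v.support.equivFin.symm
  have sum_support (f : V → ℝ) : ∑ x ∈ v.support, f x = ∑ j, f (e j) := by
    rw [e.sum_comp (fun x : v.support => f x), Finset.sum_coe_sort]
  simpa only [Finsupp.sum, sum_support, star_trivial, restrictKernel, of_apply] using
    hnonneg _ (fun j => (e j).1) (fun j => (e j).1.2) fun j => v (e j)

end Rank

section Polynomial

variable {ι : Type} {V : Set (ι → ℝ)} {K : (ι → ℝ) → (ι → ℝ) → ℝ} {m n : ℕ}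

instance finiteDimensional_polySpace [Finite ι] : FiniteDimensional ℝ (polySpace V n) :=
  inferInstanceAs (FiniteDimensional ℝ ((restrictTotalDegree ι ℝ n).map (restrictEval V)))

theorem exists_forall_eq_eval_of_forall_mem_polySpace {κ : Type*} {f : κ → V → ℝ}
    (hf : ∀ i, f i ∈ polySpace V n) :
    ∃ p : κ → restrictTotalDegree ι ℝ n, ∀ i (x : V), f i x = eval x.1 (p i).1 := by
  choose p hp hpf using hf
  exact ⟨fun i => ⟨p i, hp i⟩, fun i x => (congrFun (hpf i) x).symm⟩

theorem eq_sum_eval_of_restrictKernel_eq_mul {κ : Type*} [Fintype κ] {F : Matrix V κ ℝ}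
    {G : Matrix κ V ℝ} (hK : restrictKernel V K = F * G) {p q : κ → MvPolynomial ι ℝ}
    (hp : ∀ i (x : V), F x i = eval x.1 (p i)) (hq : ∀ i (y : V), G i y = eval y.1 (q i)) :
    ∀ x ∈ V, ∀ y ∈ V, K x y = ∑ i, eval x (p i) * eval y (q i) := by
  intro x hx y hy
  calc K x y = ∑ i, F ⟨x, hx⟩ i * G i ⟨y, hy⟩ := congrFun₂ hK ⟨x, hx⟩ ⟨y, hy⟩
    _ = ∑ i, eval x (p i) * eval y (q i) := by simp only [hp, hq]

theorem prod_pow_mem_polySpace [Fintype ι] (e : ι → ℕ) (he : ∑ i, e i ≤ n) :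
    (fun x : V => ∏ i, x.1 i ^ e i) ∈ polySpace V n := by
  refine ⟨∏ i, X i ^ e i, (mem_restrictTotalDegree _ _ _).2 ?_, ?_⟩
  · refine (totalDegree_finsetProd _ _).trans ?_
    simpa only [totalDegree_X_pow] using he
  · ext x
    simp [restrictEval]

theorem stmt_7_general [Finite ι]
    (hcol : ∀ y, (restrictKernel V K).col y ∈ polySpace V m)
    (hrow : ∀ x, (restrictKernel V K).row x ∈ polySpace V n) :
    (∃ (p : Fin (rankOn V K) → restrictTotalDegree ι ℝ m)
        (q : Fin (rankOn V K) → restrictTotalDegree ι ℝ n),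
      ∀ x ∈ V, ∀ y ∈ V, K x y = ∑ i, eval x (p i).1 * eval y (q i).1) ∧
    ((restrictKernel V K).PosSemidef → ∃ p : Fin (rankOn V K) → restrictTotalDegree ι ℝ n,
      ∀ x ∈ V, ∀ y ∈ V, K x y = ∑ i, eval x (p i).1 * eval y (p i).1) := by
  obtain ⟨F₀, G₀, hK⟩ := exists_eq_mul_of_forall_row_mem _ hrow
  obtain ⟨F, G, h⟩ := exists_isRankFactorization_rankOn hK
  constructor
  · obtain ⟨p, hp⟩ := exists_forall_eq_eval_of_forall_mem_polySpace (h.col_mem _ hcol)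
    obtain ⟨q, hq⟩ := exists_forall_eq_eval_of_forall_mem_polySpace (h.row_mem _ hrow)
    exact ⟨p, q, eq_sum_eval_of_restrictKernel_eq_mul h.eq_mul hp hq⟩
  · intro hpsd
    obtain ⟨S, hS⟩ := h.exists_eq_conjTranspose_mul_self hpsd
    obtain ⟨p, hp⟩ := exists_forall_eq_eval_of_forall_mem_polySpace (f := S * G)
      (row_mul_mem (h.row_mem _ hrow))
    exact ⟨p, eq_sum_eval_of_restrictKernel_eq_mul hS hp hp⟩

end Polynomial

section PolyKer

variable {d n : ℕ}

theorem polyKer_swap (c : MIdx d n → MIdx d n → ℝ) (x y : Fin d → ℝ) :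
    polyKer c x y = polyKer (fun a b => c b a) y x := by
  simp only [polyKer]
  rw [Finset.sum_comm]
  simp only [mul_comm]

theorem polyKer_comm {c : MIdx d n → MIdx d n → ℝ} (hsym : ∀ a b, c a b = c b a)
    (x y : Fin d → ℝ) : polyKer c x y = polyKer c y x := by
  rw [polyKer_swap c x y, show (fun a b => c b a) = c from funext₂ fun a b => hsym b a]

theorem row_restrictKernel_polyKer_mem (V : Set (Fin d → ℝ)) (c : MIdx d n → MIdx d n → ℝ)
    (x : V) : (restrictKernel V (polyKer c)).row x ∈ polySpace V n := by
  have row_eq : (restrictKernel V (polyKer c)).row x = ∑ a : MIdx d n, ∑ b : MIdx d n,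
      (c a b * ∏ i, x.1 i ^ (a.1 i : ℕ)) • fun y : V => ∏ i, y.1 i ^ (b.1 i : ℕ) := by
    ext y
    simp [restrictKernel, polyKer, mul_assoc]
  rw [row_eq]
  exact Submodule.sum_mem _ fun a _ => Submodule.sum_mem _ fun b _ =>
    Submodule.smul_mem _ _ (prod_pow_mem_polySpace _ b.2)

theorem col_restrictKernel_polyKer_mem (V : Set (Fin d → ℝ)) (c : MIdx d n → MIdx d n → ℝ)
    (y : V) : (restrictKernel V (polyKer c)).col y ∈ polySpace V n := by
  have col_eq : (restrictKernel V (polyKer c)).col y =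
      (restrictKernel V (polyKer fun a b => c b a)).row y :=
    funext fun x => polyKer_swap c x y
  exact col_eq ▸ row_restrictKernel_polyKer_mem V _ y

end PolyKer

/-- **Polynomial kernels over a set admit optimal polynomial factorizations.** With
`r` the rank of the polynomial kernel `K` restricted to `V × V`, there exist maps
`φ, ψ : ℝ^d → ℝ^r` whose coordinate functions are polynomials, with
`K(x,y) = ⟨φ(x), ψ(y)⟩` on `V × V`; if moreover `K` is positive semidefinite on `V`,
one can take `φ = ψ`. -/
theorem stmt_7 (d n : ℕ) (V : Set (Fin d → ℝ)) (c : MIdx d n → MIdx d n → ℝ)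
    (hsym : ∀ a b, c a b = c b a) :
    (∃ φ ψ : (Fin d → ℝ) → Fin (rankOn V (polyKer c)) → ℝ,
      (∀ i, ∃ p : MvPolynomial (Fin d) ℝ, ∀ x, φ x i = MvPolynomial.eval x p) ∧
      (∀ i, ∃ p : MvPolynomial (Fin d) ℝ, ∀ x, ψ x i = MvPolynomial.eval x p) ∧
      ∀ x ∈ V, ∀ y ∈ V, polyKer c x y = ∑ i, φ x i * ψ y i) ∧
    ((∀ (N : ℕ) (z : Fin N → Fin d → ℝ), (∀ j, z j ∈ V) →
        ∀ v : Fin N → ℝ, 0 ≤ ∑ j, ∑ l, v j * polyKer c (z j) (z l) * v l) →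
      ∃ φ : (Fin d → ℝ) → Fin (rankOn V (polyKer c)) → ℝ,
        (∀ i, ∃ p : MvPolynomial (Fin d) ℝ, ∀ x, φ x i = MvPolynomial.eval x p) ∧
        ∀ x ∈ V, ∀ y ∈ V, polyKer c x y = ∑ i, φ x i * φ y i) := by
  obtain ⟨⟨p, q, hpq⟩, gram⟩ := stmt_7_general (col_restrictKernel_polyKer_mem V c)
    (row_restrictKernel_polyKer_mem V c)
  refine ⟨⟨_, _, fun i => ⟨p i, fun _ => rfl⟩, fun i => ⟨q i, fun _ => rfl⟩, hpq⟩, fun hpsd => ?_⟩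
  obtain ⟨p, hp⟩ := gram (posSemidef_restrictKernel (fun x _ y _ => polyKer_comm hsym x y) hpsd)
  exact ⟨_, fun i => ⟨p i, fun _ => rfl⟩, hp⟩
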